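/- arXiv:1505.05568 — 2 statements merged into one kernel-verified Lean document; each statement's English description precedes it below -/
import Mathlib

section
/- For every natural number n: Σ_{k=0}^{n} ((k+1)²/(n+1)) * C(2n+2, n−k) = 4^n. Equivalently, Σ_{k=0}^{n} (k+1)² * C(2n+2, n−k) = (n+1) * 4^n, where C(a,b) denotes the binomial coefficient. -/
/-!
Reversing the summation (`j = n - k`), the claim becomes
`∑_{j ≤ n} (n + 1 - j)² C(2n+2, j) = (n + 1) 4ⁿ`. The partial sums up to `m` have the form
`(n + 1) (∑_{j ≤ m} C(2n+1, j) + (n - m) C(2n+1, m))` (`shapiro_partial_sum`). At `m = n` the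
correction term vanishes, and what remains is the half row sum `∑_{j ≤ n} C(2n+1, j) = 4ⁿ`.
-/

open Finset

/-- The induction step reduces, by Pascal's rule, to the absorption identity
`(m + 1) C(2n+1, m+1) = (2n + 1 - m) C(2n+1, m)`. -/
lemma shapiro_partial_sum (n m : ℕ) :
    ∑ j ∈ Finset.range (m + 1), ((n : ℝ) + 1 - j) ^ 2 * (Nat.choose (2 * n + 2) j) =
      (n + 1) * (∑ j ∈ Finset.range (m + 1), (Nat.choose (2 * n + 1) j : ℝ) +
        (n - m) * Nat.choose (2 * n + 1) m) := by
  induction m with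
  | zero => simp; ring
  | succ m ih =>
    rw [Finset.sum_range_succ, ih, Finset.sum_range_succ _ (m + 1)]
    have pascal : (Nat.choose (2 * n + 2) (m + 1) : ℝ) =
        Nat.choose (2 * n + 1) m + Nat.choose (2 * n + 1) (m + 1) := by
      exact_mod_cast Nat.choose_succ_succ (2 * n + 1) m
    have absorb : ((m : ℝ) + 1) * Nat.choose (2 * n + 1) (m + 1) =
        (2 * n + 1 - m) * Nat.choose (2 * n + 1) m := by
      -- Beyond the row both coefficients vanish, where truncated subtraction would mislead.
      rcases le_or_gt m (2 * n + 1) with h | h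
      · have e := Nat.choose_succ_right_eq (2 * n + 1) m
        have e' := congrArg (Nat.cast : ℕ → ℝ) e
        push_cast [Nat.cast_sub h] at e'
        linarith
      · rw [Nat.choose_eq_zero_of_lt h, Nat.choose_eq_zero_of_lt (by omega)]
        simp
    rw [pascal]
    push_cast
    linear_combination (-((n : ℝ) - m)) * absorb

/-- Shapiro's identity: the Shapiro Catalan triangle applied to the sequence
of natural numbers yields the column of powers of 4. -/
theorem shapiro_identity (n : ℕ) :
    ∑ k ∈ Finset.range (n + 1),
        ((k + 1 : ℝ) ^ 2 / (n + 1)) * (Nat.choose (2 * n + 2) (n - k)) = 4 ^ n := by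
  have hn : (n : ℝ) + 1 ≠ 0 := by positivity
  have half : ∑ j ∈ Finset.range (n + 1), (Nat.choose (2 * n + 1) j : ℝ) = 4 ^ n := by
    exact_mod_cast Nat.sum_range_choose_halfway n
  have key := shapiro_partial_sum n n
  rw [half, sub_self, zero_mul, add_zero, ← Finset.sum_range_reflect] at key
  rw [← mul_right_inj' hn, ← key, Finset.mul_sum]
  refine Finset.sum_congr rfl fun k hk => ?_
  have hk' : k ≤ n := Nat.lt_succ_iff.mp (Finset.mem_range.mp hk)
  rw [show n + 1 - 1 - k = n - k by omega, Nat.cast_sub hk']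
  field_simp
  ring
end

section
/- For every natural number n: Σ_{k=0}^{n} ((k+1)/(n+1)) * C(2n+2, n−k) * F(2k+2) = 5^n, where F denotes the Fibonacci sequence with F(1) = F(2) = 1. Equivalently, Σ_{k=0}^{n} (k+1) * C(2n+2, n−k) * F(2k+2) = (n+1) * 5^n. -/
/-!
Put `D n j = C(2n+1, n+j) - C(2n+1, n+1+j)`. This ballot number equals `(j/(n+1)) C(2n+2, n+1+j)`
(`ballot_eq`), so by the symmetry of binomial coefficients the sum in question is
`∑ j, D n j * F(2j)` with `j = k + 1` (the term `j = 0` vanishes). Pascal's rule applied twice gives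
`D (n+1) (j+1) = D n j + 2 * D n (j+1) + D n (j+2)`, while `F(2j-2) + 2 F(2j) + F(2j+2) = 5 F(2j)`.
Moving the first recurrence onto the Fibonacci factor by summation by parts
(`sum_ballot_succ`) shows that the sum is multiplied by `5` when `n` increases by one.
-/

open Finset

/-- The ballot number `C(2n+1, n+j) - C(2n+1, n+1+j)`. For `j = k + 1` it is the entry in row `n`,
column `k` of the Shapiro Catalan triangle; unlike `C(2n+2, n-k)` with truncated subtraction, it
vanishes to the right of the diagonal. -/
def ballot (n j : ℕ) : ℝ :=
  (Nat.choose (2 * n + 1) (n + j) : ℝ) - Nat.choose (2 * n + 1) (n + 1 + j)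

lemma ballot_zero_right (n : ℕ) : ballot n 0 = 0 := by
  have h : Nat.choose (2 * n + 1) n = Nat.choose (2 * n + 1) (n + 1) :=
    Nat.choose_symm_of_eq_add (by ring)
  simp [ballot, h]

lemma ballot_eq_zero {n j : ℕ} (h : n + 2 ≤ j) : ballot n j = 0 := by
  rw [ballot, Nat.choose_eq_zero_of_lt (by omega), Nat.choose_eq_zero_of_lt (by omega)]
  simp

lemma ballot_succ (n j : ℕ) :
    ballot (n + 1) (j + 1) = ballot n j + 2 * ballot n (j + 1) + ballot n (j + 2) := by
  have key (m : ℕ) : (Nat.choose (2 * n + 3) (m + 2) : ℝ) =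
      Nat.choose (2 * n + 1) m + 2 * Nat.choose (2 * n + 1) (m + 1)
        + Nat.choose (2 * n + 1) (m + 2) := by
    rw [Nat.choose_succ_succ' (2 * n + 2), Nat.choose_succ_succ' (2 * n + 1),
      Nat.choose_succ_succ' (2 * n + 1)]
    push_cast
    ring
  have h1 := key (n + j)
  have h2 := key (n + j + 1)
  simp only [ballot]
  rw [show 2 * (n + 1) + 1 = 2 * n + 3 by ring, show n + 1 + (j + 1) = n + j + 2 by ring,
    show n + 1 + 1 + (j + 1) = n + j + 1 + 2 by ring, h1, h2,
    show n + 1 + j = n + j + 1 by ring, show n + (j + 1) = n + j + 1 by ring,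
    show n + (j + 2) = n + j + 2 by ring, show n + 1 + (j + 2) = n + j + 1 + 2 by ring]
  ring_nf

lemma ballot_eq (n j : ℕ) :
    ballot n j = (j : ℝ) / (n + 1) * Nat.choose (2 * n + 2) (n + 1 + j) := by
  have h1 : ((2 * n + 2 : ℝ)) * Nat.choose (2 * n + 1) (n + j) =
      Nat.choose (2 * n + 2) (n + j + 1) * (n + j + 1) := by
    exact_mod_cast Nat.add_one_mul_choose_eq (2 * n + 1) (n + j)
  have h2 : (Nat.choose (2 * n + 2) (n + j + 1) : ℝ) =
      Nat.choose (2 * n + 1) (n + j) + Nat.choose (2 * n + 1) (n + j + 1) := by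
    exact_mod_cast Nat.choose_succ_succ' (2 * n + 1) (n + j)
  have hn : (n + 1 : ℝ) ≠ 0 := by positivity
  rw [ballot, show n + 1 + j = n + j + 1 by ring]
  field_simp
  linear_combination h1 + (n + 1 : ℝ) * h2

lemma fib_even_rec (m : ℕ) :
    (Nat.fib (2 * m + 4) : ℝ) + Nat.fib (2 * m) = 3 * Nat.fib (2 * m + 2) := by
  have h1 := Nat.fib_add_two (n := 2 * m)
  have h2 := Nat.fib_add_two (n := 2 * m + 1)
  have h3 := Nat.fib_add_two (n := 2 * m + 2)
  norm_cast
  grind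

/-- Summation by parts: passing from row `n` to row `n + 1` multiplies a partial sum by `5`, up to
two boundary terms, which vanish once the range covers the whole support of the row. -/
lemma sum_ballot_succ (n M : ℕ) :
    ∑ j ∈ range (M + 1), ballot (n + 1) j * Nat.fib (2 * j) =
      5 * ∑ j ∈ range (M + 1), ballot n j * Nat.fib (2 * j)
        + ballot n (M + 1) * Nat.fib (2 * M) - ballot n M * Nat.fib (2 * M + 2) := by
  induction M with
  | zero => simp [ballot_zero_right]
  | succ M ih =>
    rw [sum_range_succ, ih, sum_range_succ _ (M + 1), ballot_succ]
    have h := fib_even_rec M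
    rw [show 2 * (M + 1) + 2 = 2 * M + 4 by ring, show 2 * (M + 1) = 2 * M + 2 by ring,
      show M + 1 + 1 = M + 2 by ring]
    linear_combination ballot n (M + 1) * h

lemma sum_ballot (n : ℕ) :
    ∑ j ∈ range (n + 2), ballot n j * Nat.fib (2 * j) = 5 ^ n := by
  induction n with
  | zero => simp [sum_range_succ, ballot]
  | succ n ih =>
    rw [sum_ballot_succ n (n + 2), sum_range_succ, ih, ballot_eq_zero le_rfl,
      ballot_eq_zero (by omega : n + 2 ≤ n + 2 + 1)]
    ring

/-- The Shapiro Catalan triangle applied to the even-indexed Fibonacci numbers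
yields the column of powers of 5. -/
theorem shapiro_fibonacci_identity (n : ℕ) :
    ∑ k ∈ Finset.range (n + 1),
        ((k + 1 : ℝ) / (n + 1)) * (Nat.choose (2 * n + 2) (n - k)) *
          (Nat.fib (2 * k + 2)) = 5 ^ n := by
  rw [← sum_ballot n, sum_range_succ' _ (n + 1), ballot_zero_right, zero_mul, add_zero]
  refine sum_congr rfl fun k hk => ?_
  have hk' : k < n + 1 := mem_range.mp hk
  have h : Nat.choose (2 * n + 2) (n - k) = Nat.choose (2 * n + 2) (n + 1 + (k + 1)) :=
    Nat.choose_symm_of_eq_add (by omega)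
  rw [ballot_eq, h, mul_add_one]
  push_cast
  rfl
end
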